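/- On the 2-sphere with metric dθ² + sin²θ dφ², with G = a₁ sin φ sin θ + a₂ cos φ sin θ (i.e., a₃ = 0) and potential V = F((a₁ cos φ − a₂ sin φ) tan θ)/cos²θ for any differentiable F, the compatibility equation g^{ij} ∂_i V ∂_j G = 2 V G holds (the case mc = 1, L₀ = 0). -/

import Mathlib

/-- Partial derivative with respect to the first coordinate. -/
noncomputable def pd1 (f : ℝ × ℝ → ℝ) : ℝ × ℝ → ℝ :=
  fun p => deriv (fun s => f (s, p.2)) p.1

/-- Partial derivative with respect to the second coordinate. -/
noncomputable def pd2 (f : ℝ × ℝ → ℝ) : ℝ × ℝ → ℝ :=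
  fun p => deriv (fun s => f (p.1, s)) p.2

/-!
On the unit sphere, linear forms satisfy `∇(a ⬝ᵥ x) · ∇(b ⬝ᵥ x) = a ⬝ᵥ b - (a ⬝ᵥ x) (b ⬝ᵥ x)`.
Here `G` is the linear form of `a = (a₁, a₂, 0)`, while `V = F (ℓ / z) / z ^ 2`, where
`z = cos θ` and `ℓ = (a₁ cos φ - a₂ sin φ) sin θ` are the linear forms of two vectors orthogonal
to `a`. Differentiation along `∇G` therefore multiplies both `ℓ` and `z` by `-G`, and since `V` is
homogeneous of degree `-2` in `(ℓ, z)`, it multiplies `V` by `2 G`.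
-/

open scoped Matrix

/-- The restriction to the sphere of the linear form `x ↦ a ⬝ᵥ x` on `ℝ³`, in the coordinates
`p = (θ, φ)` with `x = (sin φ sin θ, cos φ sin θ, cos θ)`. -/
noncomputable def sphereLinear (a : Fin 3 → ℝ) (p : ℝ × ℝ) : ℝ :=
  (a 0 * Real.sin p.2 + a 1 * Real.cos p.2) * Real.sin p.1 + a 2 * Real.cos p.1

/-- The gradient of `g` for the round metric `dθ² + sin²θ dφ²`, as the pair of its contravariant
components in the coordinates `p = (θ, φ)`. -/
noncomputable def sphereGrad (g : ℝ × ℝ → ℝ) (p : ℝ × ℝ) : ℝ × ℝ :=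
  (pd1 g p, 1 / Real.sin p.1 ^ 2 * pd2 g p)

section Gradient

variable {f : ℝ × ℝ → ℝ} {p : ℝ × ℝ}

theorem pd1_eq_fderiv (hf : DifferentiableAt ℝ f p) : pd1 f p = fderiv ℝ f p (1, 0) :=
  (hf.hasFDerivAt.comp_hasDerivAt p.1
    ((hasDerivAt_id p.1).prodMk (hasDerivAt_const p.1 p.2))).deriv

theorem pd2_eq_fderiv (hf : DifferentiableAt ℝ f p) : pd2 f p = fderiv ℝ f p (0, 1) :=
  (hf.hasFDerivAt.comp_hasDerivAt p.2
    ((hasDerivAt_const p.2 p.1).prodMk (hasDerivAt_id p.2))).deriv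

theorem fderiv_apply_sphereGrad (hf : DifferentiableAt ℝ f p) (g : ℝ × ℝ → ℝ) :
    fderiv ℝ f p (sphereGrad g p) =
      pd1 f p * pd1 g p + 1 / Real.sin p.1 ^ 2 * pd2 f p * pd2 g p := by
  have hgrad : sphereGrad g p =
      pd1 g p • ((1, 0) : ℝ × ℝ) + (1 / Real.sin p.1 ^ 2 * pd2 g p) • ((0, 1) : ℝ × ℝ) := by
    simp [sphereGrad]
  rw [hgrad, map_add, map_smul, map_smul, ← pd1_eq_fderiv hf, ← pd2_eq_fderiv hf, smul_eq_mul,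
    smul_eq_mul]
  ring

end Gradient

section SphereLinear

theorem dotProduct_vec3_rotate {R : Type*} [CommRing R] (a₁ a₂ : R) :
    ![a₁, a₂, 0] ⬝ᵥ ![-a₂, a₁, 0] = 0 := by
  simp only [Matrix.vec3_dotProduct, Matrix.cons_val]
  ring

theorem differentiable_sphereLinear (a : Fin 3 → ℝ) : Differentiable ℝ (sphereLinear a) := by
  unfold sphereLinear
  fun_prop

theorem pd1_sphereLinear (a : Fin 3 → ℝ) (p : ℝ × ℝ) :
    pd1 (sphereLinear a) p =
      (a 0 * Real.sin p.2 + a 1 * Real.cos p.2) * Real.cos p.1 - a 2 * Real.sin p.1 := by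
  have h := ((Real.hasDerivAt_sin p.1).const_mul (a 0 * Real.sin p.2 + a 1 * Real.cos p.2)).add
    ((Real.hasDerivAt_cos p.1).const_mul (a 2))
  exact h.deriv.trans (by ring)

theorem pd2_sphereLinear (a : Fin 3 → ℝ) (p : ℝ × ℝ) :
    pd2 (sphereLinear a) p = (a 0 * Real.cos p.2 - a 1 * Real.sin p.2) * Real.sin p.1 := by
  have h := ((((Real.hasDerivAt_sin p.2).const_mul (a 0)).add
    ((Real.hasDerivAt_cos p.2).const_mul (a 1))).mul_const (Real.sin p.1)).add_const
      (a 2 * Real.cos p.1)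
  exact h.deriv.trans (by ring)

-- The tangential gradient of `a ⬝ᵥ x` at a unit vector `x` is `a - (a ⬝ᵥ x) • x`.
theorem fderiv_sphereLinear_sphereGrad (a b : Fin 3 → ℝ) {p : ℝ × ℝ} (hs : Real.sin p.1 ≠ 0) :
    fderiv ℝ (sphereLinear b) p (sphereGrad (sphereLinear a) p) =
      a ⬝ᵥ b - sphereLinear a p * sphereLinear b p := by
  have hφ : 1 / Real.sin p.1 ^ 2 * pd2 (sphereLinear b) p * pd2 (sphereLinear a) p =
      (a 0 * Real.cos p.2 - a 1 * Real.sin p.2) * (b 0 * Real.cos p.2 - b 1 * Real.sin p.2) := by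
    rw [pd2_sphereLinear, pd2_sphereLinear]
    field_simp
  rw [fderiv_apply_sphereGrad (differentiable_sphereLinear b p), hφ, pd1_sphereLinear,
    pd1_sphereLinear, sphereLinear, sphereLinear, dotProduct, Fin.sum_univ_three]
  linear_combination
    ((a 0 * Real.sin p.2 + a 1 * Real.cos p.2) * (b 0 * Real.sin p.2 + b 1 * Real.cos p.2)
      + a 2 * b 2) * Real.sin_sq_add_cos_sq p.1
    + (a 0 * b 0 + a 1 * b 1) * Real.sin_sq_add_cos_sq p.2

theorem sphereLinear_height (p : ℝ × ℝ) : sphereLinear ![0, 0, 1] p = Real.cos p.1 := by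
  simp [sphereLinear]

theorem sphereLinear_rotate_div_height (a₁ a₂ : ℝ) (p : ℝ × ℝ) :
    sphereLinear ![-a₂, a₁, 0] p / sphereLinear ![0, 0, 1] p =
      (a₁ * Real.cos p.2 - a₂ * Real.sin p.2) * Real.tan p.1 := by
  rw [sphereLinear_height, Real.tan_eq_sin_div_cos]
  simp only [sphereLinear, Matrix.cons_val]
  ring

end SphereLinear

section Homogeneous

variable {𝕜 E : Type*} [NontriviallyNormedField 𝕜] [NormedAddCommGroup E] [NormedSpace 𝕜 E]
  {f g : E → 𝕜} {x : E}

theorem hasFDerivAt_fun_div {f' g' : E →L[𝕜] 𝕜} (hf : HasFDerivAt f f' x)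
    (hg : HasFDerivAt g g' x) (hgx : g x ≠ 0) :
    HasFDerivAt (fun y => f y / g y) ((g x ^ 2)⁻¹ • (g x • f' - f x • g')) x := by
  simp only [div_eq_mul_inv]
  refine (hf.fun_mul ((hasDerivAt_inv hgx).comp_hasFDerivAt x hg)).congr_fderiv ?_
  ext v
  simp only [Function.comp_apply, add_apply, sub_apply, smul_apply, smul_eq_mul]
  field_simp
  ring

theorem fderiv_comp_div_div_pow_apply {F : 𝕜 → 𝕜} {v : E} {r : 𝕜}
    (hF : DifferentiableAt 𝕜 F (f x / g x)) (hf : DifferentiableAt 𝕜 f x)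
    (hg : DifferentiableAt 𝕜 g x) (hgx : g x ≠ 0) (hfv : fderiv 𝕜 f x v = r * f x)
    (hgv : fderiv 𝕜 g x v = r * g x) (n : ℕ) :
    fderiv 𝕜 (fun y => F (f y / g y) / g y ^ n) x v = -(n * r) * (F (f x / g x) / g x ^ n) := by
  have hratio := hasFDerivAt_fun_div hf.hasFDerivAt hg.hasFDerivAt hgx
  have hcomp : HasFDerivAt (fun y => F (f y / g y)) _ x :=
    hF.hasDerivAt.comp_hasFDerivAt x hratio
  have hcomp_apply : fderiv 𝕜 (fun y => F (f y / g y)) x v = 0 := by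
    rw [hcomp.fderiv]
    simp only [sub_apply, smul_apply, smul_eq_mul, hfv, hgv]
    ring
  have hpow_apply : fderiv 𝕜 (fun y => g y ^ n) x v = n * r * g x ^ n := by
    rw [fderiv_fun_pow n hg]
    cases n with
    | zero => simp
    | succ n =>
      simp only [add_tsub_cancel_right, nsmul_eq_mul, smul_apply, smul_eq_mul, hgv]
      ring
  have hquot := hasFDerivAt_fun_div hcomp.differentiableAt.hasFDerivAt
    (hg.fun_pow n).hasFDerivAt (pow_ne_zero n hgx)
  rw [hquot.fderiv]
  simp only [sub_apply, smul_apply, smul_eq_mul, hcomp_apply, hpow_apply]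
  field_simp
  ring

end Homogeneous

theorem sphere_potential_compatibility_general {a b c : Fin 3 → ℝ} (hab : a ⬝ᵥ b = 0)
    (hac : a ⬝ᵥ c = 0) (n : ℕ) {F : ℝ → ℝ} {G V : ℝ × ℝ → ℝ} (hG : G = sphereLinear a)
    (hV : V = fun q => F (sphereLinear b q / sphereLinear c q) / sphereLinear c q ^ n)
    {p : ℝ × ℝ} (hF : DifferentiableAt ℝ F (sphereLinear b p / sphereLinear c p))
    (hc : sphereLinear c p ≠ 0) (hs : Real.sin p.1 ≠ 0) :
    pd1 V p * pd1 G p + (1 / (Real.sin p.1) ^ 2) * pd2 V p * pd2 G p = n * V p * G p := by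
  subst hG
  have hbd := differentiable_sphereLinear b p
  have hcd := differentiable_sphereLinear c p
  have hratio := (hasFDerivAt_fun_div hbd.hasFDerivAt hcd.hasFDerivAt hc).differentiableAt
  have hVd : DifferentiableAt ℝ V p :=
    hV ▸ (hasFDerivAt_fun_div (hF.comp p hratio).hasFDerivAt (hcd.fun_pow n).hasFDerivAt
      (pow_ne_zero n hc)).differentiableAt
  have hgrad : ∀ d : Fin 3 → ℝ, a ⬝ᵥ d = 0 →
      fderiv ℝ (sphereLinear d) p (sphereGrad (sphereLinear a) p) =
        -sphereLinear a p * sphereLinear d p := by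
    intro d hd
    rw [fderiv_sphereLinear_sphereGrad a d hs, hd]
    ring
  rw [← fderiv_apply_sphereGrad hVd, hV,
    fderiv_comp_div_div_pow_apply hF hbd hcd hc (hgrad b hab) (hgrad c hac)]
  ring

/-- On the 2-sphere with metric `dθ² + sin²θ dφ²`, with
`G = (a₁ sin φ + a₂ cos φ) sin θ` and
`V = F((a₁ cos φ - a₂ sin φ) tan θ) / cos²θ`, the compatibility equation
`∂_θ V ∂_θ G + (1/sin²θ) ∂_φ V ∂_φ G = 2 V G` holds (case `mc = 1`, `L₀ = 0`). -/
theorem sphere_potential_compatibility (a₁ a₂ : ℝ)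
    (F : ℝ → ℝ) (hF : Differentiable ℝ F)
    (G V : ℝ × ℝ → ℝ)
    (hG : ∀ p : ℝ × ℝ, G p = (a₁ * Real.sin p.2 + a₂ * Real.cos p.2) * Real.sin p.1)
    (hV : ∀ p : ℝ × ℝ, V p =
      F ((a₁ * Real.cos p.2 - a₂ * Real.sin p.2) * Real.tan p.1) / (Real.cos p.1) ^ 2) :
    ∀ p : ℝ × ℝ, Real.cos p.1 ≠ 0 → Real.sin p.1 ≠ 0 →
      pd1 V p * pd1 G p + (1 / (Real.sin p.1) ^ 2) * pd2 V p * pd2 G p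
        = 2 * V p * G p := by
  intro p hc hs
  exact mod_cast sphere_potential_compatibility_general (dotProduct_vec3_rotate a₁ a₂)
    (by simp : ![a₁, a₂, 0] ⬝ᵥ ![0, 0, 1] = 0) 2
    (funext fun q => by simp [hG, sphereLinear])
    (funext fun q => by rw [hV, sphereLinear_rotate_div_height, sphereLinear_height])
    (hF _) (by rwa [sphereLinear_height]) hs
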